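/- arXiv:2201.11426 — 3 statements merged into one kernel-verified Lean document; each statement's English description precedes it below -/
import Mathlib

section
/- Let (T, T̃) be a pair of densely defined operators with common dense domain on a complex Hilbert space H satisfying (T1) and (T2), with minimal domain W₀ and graph space W. A subspace V of W containing W₀ is closed in W (with respect to the graph norm) if and only if V = V^{[⊥][⊥]}, where S^{[⊥]} := {u ∈ W : [u | v] = 0 for all v ∈ S} and [u | v] := ⟨T₁u, v⟩ − ⟨u, T̃₁v⟩. -/
open LinearPMap
open scoped LinearPMap

noncomputable section

variable {H : Type*} [NormedAddCommGroup H] [InnerProductSpace ℂ H] [CompleteSpace H]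

local notation "⟪" x ", " y "⟫" => @inner ℂ _ _ x y

/-- Conditions (T1)–(T2) for a pair of operators with common dense domain. -/
structure IsPreFriedrichsPair (T Tt : H →ₗ.[ℂ] H) : Prop where
  dom_eq : T.domain = Tt.domain
  dense' : Dense (T.domain : Set H)
  t1 : ∀ (φ : T.domain) (ψ : Tt.domain), ⟪T φ, (ψ : H)⟫ = ⟪(φ : H), Tt ψ⟫
  t2 : ∃ c : ℝ, 0 < c ∧ ∀ φ : (T + Tt).domain, ‖(T + Tt) φ‖ ≤ c * ‖(φ : H)‖

/-- A joint pair of abstract Friedrichs operators: (T1)–(T3). -/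
structure IsFriedrichsPair (T Tt : H →ₗ.[ℂ] H) extends IsPreFriedrichsPair T Tt : Prop where
  t3 : ∃ μ₀ : ℝ, 0 < μ₀ ∧ ∀ φ : (T + Tt).domain,
        2 * μ₀ * ‖(φ : H)‖ ^ 2 ≤ (⟪(T + Tt) φ, (φ : H)⟫).re

/-- The `[⊥]`-orthogonal complement, inside the graph space `W = dom T₁ = dom T̃₁`, of a set
`S ⊆ W`, with respect to the boundary form `[u | v] := ⟪T₁ u, v⟫ − ⟪u, T̃₁ v⟫`. -/
def bdryPerp (T₁ Tt₁ : H →ₗ.[ℂ] H) (S : Set H) : Set H :=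
  {x | ∃ hx : x ∈ T₁.domain,
    ∀ (v : T₁.domain) (w : Tt₁.domain), (v : H) = (w : H) → (v : H) ∈ S →
      ⟪T₁ ⟨x, hx⟩, (v : H)⟫ - ⟪x, Tt₁ w⟫ = 0}

/-!
Let `S` be the restriction of `T₁ = T̃†` to `V`, so that `T ≤ S ≤ T̃†`, and hence
`T̃ ≤ S† ≤ T†`. An element of `dom T†` lies in `dom S†` iff the boundary form pairs it to zero
with `dom S = V`; likewise `dom S††` consists of the elements of `dom T̃†` which the form pairs to
zero with `dom S†`. So the double complement of `V` is `dom S††`, which equals `dom S` exactly when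
`S` is closed. Here the complements are taken alternately in `dom T†` and `dom T̃†`. By (T2) the
sum `T + T̃` extends to a bounded self-adjoint operator `C`, whence `T† = C - T̃†`: the two domains
coincide, the form is Hermitian, and the complements on its two sides agree.
-/

theorem coe_graph_domRestrict {R M N : Type*} [Ring R] [AddCommGroup M] [Module R M]
    [AddCommGroup N] [Module R N] (A : M →ₗ.[R] N) (V : Submodule R M) :
    ((A.domRestrict V).graph : Set (M × N)) = {p | p.1 ∈ V ∧ p ∈ A.graph} := by
  ext ⟨a, b⟩
  simp only [Set.mem_ofPred_eq, SetLike.mem_coe, mem_graph_iff]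
  constructor
  · rintro ⟨y, rfl, hy⟩
    exact ⟨y.2.1, ⟨y, y.2.2⟩, rfl, (domRestrict_apply rfl).symm.trans hy⟩
  · rintro ⟨ha, y, rfl, hy⟩
    exact ⟨⟨y, ha, y.2⟩, rfl, (domRestrict_apply rfl).trans hy⟩

section Adjoint

variable {𝕜 E F : Type*} [RCLike 𝕜]
  [NormedAddCommGroup E] [InnerProductSpace 𝕜 E]
  [NormedAddCommGroup F] [InnerProductSpace 𝕜 F]

theorem isFormalAdjoint_add_self {A B : E →ₗ.[𝕜] E} (hAB : A.IsFormalAdjoint B) :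
    (A + B).IsFormalAdjoint (A + B) := fun x y => by
  have hA := hAB ⟨x, x.2.1⟩ ⟨y, y.2.2⟩
  have hB := hAB.symm ⟨x, x.2.2⟩ ⟨y, y.2.1⟩
  rw [LinearPMap.add_apply, LinearPMap.add_apply, inner_add_left, inner_add_right, hA, hB, add_comm]

variable [CompleteSpace E]

theorem adjoint_le_adjoint {A S : E →ₗ.[𝕜] F} (hA : Dense (A.domain : Set E)) (hAS : A ≤ S) :
    S† ≤ A† := by
  have hS : Dense (S.domain : Set E) := hA.mono hAS.1
  refine IsFormalAdjoint.le_adjoint hA fun a y => ?_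
  rw [hAS.2 (y := ⟨a, hAS.1 a.2⟩) rfl]
  exact (adjoint_isFormalAdjoint hS).symm _ y

variable [CompleteSpace F]

theorem submodule_adjoint_adjoint_of_isClosed {g : Submodule 𝕜 (E × F)}
    (hg : IsClosed (g : Set (E × F))) : g.adjoint.adjoint = g := by
  let G : Submodule 𝕜 (WithLp 2 (E × F)) := g.comap (WithLp.linearEquiv 2 𝕜 (E × F)).toLinearMap
  have hG : IsClosed (G : Set (WithLp 2 (E × F))) :=
    hg.preimage (WithLp.prod_continuous_ofLp 2 E F)
  have : CompleteSpace G := hG.completeSpace_coe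
  refine le_antisymm (fun x hx => ?_) fun x hx => ?_
  · suffices WithLp.toLp 2 x ∈ Gᗮᗮ by rwa [G.orthogonal_orthogonal] at this
    refine (Submodule.mem_orthogonal _ _).2 fun p hp => ?_
    have hp_adjoint : (p.snd, -p.fst) ∈ g.adjoint := by
      refine (Submodule.mem_adjoint_iff _ _).2 fun a b hab => ?_
      have hinner := (Submodule.mem_orthogonal _ _).1 hp (WithLp.toLp 2 (a, b)) hab
      simpa [WithLp.prod_inner_apply, add_comm] using hinner
    have hinner := (Submodule.mem_adjoint_iff _ _).1 hx _ _ hp_adjoint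
    rw [inner_neg_left] at hinner
    change inner 𝕜 p.fst x.1 + inner 𝕜 p.snd x.2 = 0
    linear_combination -hinner
  · refine (Submodule.mem_adjoint_iff _ _).2 fun a b hab => ?_
    have hinner := (Submodule.mem_adjoint_iff _ _).1 hab _ _ hx
    rw [← inner_conj_symm, ← inner_conj_symm a, ← _root_.map_sub,
      ← neg_sub, hinner, neg_zero, _root_.map_zero]

theorem isClosed_iff_adjoint_adjoint_eq {S : E →ₗ.[𝕜] F} (hS : Dense (S.domain : Set E))
    (hS' : Dense (S†.domain : Set F)) : S.IsClosed ↔ S†† = S := by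
  refine ⟨fun hclosed => eq_of_eq_graph ?_, fun h => h ▸ adjoint_isClosed hS'⟩
  rw [adjoint_graph_eq_graph_adjoint hS', adjoint_graph_eq_graph_adjoint hS,
    submodule_adjoint_adjoint_of_isClosed hclosed]

theorem isClosed_iff_domain_eq_adjoint_adjoint_domain {S : E →ₗ.[𝕜] F}
    (hS : Dense (S.domain : Set E)) (hS' : Dense (S†.domain : Set F)) :
    S.IsClosed ↔ S.domain = S††.domain := by
  rw [isClosed_iff_adjoint_adjoint_eq hS hS']
  refine ⟨fun h => by rw [h], fun h => ?_⟩
  exact (eq_of_le_of_domain_eq ((adjoint_isFormalAdjoint hS).le_adjoint hS') h).symm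

theorem vadd_neg_adjoint_le (C : E →L[𝕜] F) {A : E →ₗ.[𝕜] F} (hA : Dense (A.domain : Set E)) :
    (C.adjoint : F →ₗ[𝕜] E) +ᵥ -A† ≤ ((C : E →ₗ[𝕜] F) +ᵥ -A)† := by
  refine IsFormalAdjoint.le_adjoint hA (IsFormalAdjoint.symm fun y x => ?_)
  have hadj : inner 𝕜 (A† y) (x : E) = inner 𝕜 (y : F) (A x) := adjoint_isFormalAdjoint hA y x
  simp only [vadd_apply, LinearPMap.neg_apply, ContinuousLinearMap.coe_coe, inner_add_left,
    inner_add_right, inner_neg_left, inner_neg_right, ContinuousLinearMap.adjoint_inner_left, hadj]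

theorem adjoint_vadd_neg (C : E →L[𝕜] F) {A : E →ₗ.[𝕜] F} (hA : Dense (A.domain : Set E)) :
    ((C : E →ₗ[𝕜] F) +ᵥ -A)† = (C.adjoint : F →ₗ[𝕜] E) +ᵥ -A† := by
  -- `A ↦ C - A` is an involution, so the inclusion for `C - A` is the reverse one for `A`.
  have hinvol : (C : E →ₗ[𝕜] F) +ᵥ -((C : E →ₗ[𝕜] F) +ᵥ -A) = A :=
    dExt rfl fun x y hxy => by
      obtain rfl : x = y := Subtype.ext hxy
      simp only [vadd_apply, LinearPMap.neg_apply, neg_add, neg_neg, add_neg_cancel_left]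
  have hle := vadd_neg_adjoint_le C (A := (C : E →ₗ[𝕜] F) +ᵥ -A) hA
  rw [hinvol] at hle
  have hge := vadd_neg_adjoint_le C hA
  exact (eq_of_le_of_domain_eq hge (le_antisymm hge.1 hle.1)).symm

theorem exists_isSelfAdjoint_extension {A : E →ₗ.[𝕜] E} (hA : Dense (A.domain : Set E))
    (hsymm : A.IsFormalAdjoint A) {c : ℝ} (hc : ∀ x : A.domain, ‖A x‖ ≤ c * ‖(x : E)‖) :
    ∃ C : E →L[𝕜] E, IsSelfAdjoint C ∧ ∀ x : A.domain, C x = A x := by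
  let C : E →L[𝕜] E := (A.toFun.mkContinuous c hc).extend A.domain.subtypeL
  have hC (x : A.domain) : C x = A x :=
    ContinuousLinearMap.extend_eq _ hA.denseRange_val
      isUniformEmbedding_subtype_val.isUniformInducing x
  refine ⟨C, ContinuousLinearMap.isSelfAdjoint_iff_isSymmetric.2 fun x y => ?_, hC⟩
  refine hA.denseRange_val.induction_on₂ (p := fun x y => inner 𝕜 (C x) y = inner 𝕜 x (C y))
    (isClosed_eq (by fun_prop) (by fun_prop)) (fun a b => ?_) x y
  rw [hC, hC]
  exact hsymm a b

end Adjoint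

section BdryAnnihilator

variable {𝕜 E F : Type*} [RCLike 𝕜]
  [NormedAddCommGroup E] [InnerProductSpace 𝕜 E]
  [NormedAddCommGroup F] [InnerProductSpace 𝕜 F]

/-- The annihilator in `dom A` of a set `S`, only `S ∩ dom B` being relevant, under the boundary
form `(u, w) ↦ ⟪A u, w⟫ - ⟪u, B w⟫` on `dom A × dom B`. In contrast to `bdryPerp`, the two
arguments of the form may range over different domains, and even over different spaces. -/
def bdryAnnihilator (A : E →ₗ.[𝕜] F) (B : F →ₗ.[𝕜] E) (S : Set F) : Set E :=
  {u | ∃ hu : u ∈ A.domain, ∀ w : B.domain, (w : F) ∈ S →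
    inner 𝕜 (A ⟨u, hu⟩) (w : F) = inner 𝕜 u (B w)}

theorem adjoint_domain_eq_bdryAnnihilator [CompleteSpace E] {A S B : E →ₗ.[𝕜] F}
    (hA : Dense (A.domain : Set E)) (hAS : A ≤ S) (hSB : S ≤ B) :
    (S†.domain : Set F) = bdryAnnihilator (A†) B S.domain := by
  have hS : Dense (S.domain : Set E) := hA.mono hAS.1
  ext y
  constructor
  · intro hy
    have hle := adjoint_le_adjoint hA hAS
    refine ⟨hle.1 hy, fun w hw => ?_⟩
    rw [← hle.2 (x := ⟨y, hy⟩) rfl, ← hSB.2 (x := ⟨w, hw⟩) rfl]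
    exact adjoint_isFormalAdjoint hS ⟨y, hy⟩ ⟨w, hw⟩
  · rintro ⟨hy, hperp⟩
    refine mem_adjoint_domain_of_exists y ⟨A† ⟨y, hy⟩, fun x => ?_⟩
    rw [hSB.2 (y := ⟨x, hSB.1 x.2⟩) rfl]
    exact hperp ⟨x, hSB.1 x.2⟩ x.2

theorem bdryAnnihilator_vadd_neg_comm [CompleteSpace E] {C : E →L[𝕜] E} (hC : IsSelfAdjoint C)
    (A : E →ₗ.[𝕜] E) (S : Set E) :
    bdryAnnihilator ((C : E →ₗ[𝕜] E) +ᵥ -A) A S =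
      bdryAnnihilator A ((C : E →ₗ[𝕜] E) +ᵥ -A) S := by
  have hCsymm (u w : E) : inner 𝕜 (C u) w = inner 𝕜 u (C w) := hC.isSymmetric u w
  refine Set.ext fun u => exists_congr fun hu => forall₂_congr fun w _ => ?_
  simp only [vadd_apply, LinearPMap.neg_apply, ContinuousLinearMap.coe_coe, inner_add_left,
    inner_add_right, inner_neg_left, inner_neg_right, hCsymm]
  rw [← sub_eq_add_neg, ← sub_eq_add_neg, sub_eq_iff_eq_add, eq_sub_iff_add_eq, eq_comm, add_comm]

theorem isClosed_iff_eq_bdryAnnihilator_bdryAnnihilator [CompleteSpace E] [CompleteSpace F]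
    {T S : E →ₗ.[𝕜] F} {Tt : F →ₗ.[𝕜] E} (hT : Dense (T.domain : Set E))
    (hTt : Dense (Tt.domain : Set F)) (hTS : T ≤ S) (hSTt : S ≤ Tt†) :
    S.IsClosed ↔
      (S.domain : Set E) = bdryAnnihilator (Tt†) (T†) (bdryAnnihilator (T†) (Tt†) S.domain) := by
  have hS : Dense (S.domain : Set E) := hT.mono hTS.1
  have hTtS : Tt ≤ S† := by
    refine IsFormalAdjoint.le_adjoint hS fun x y => ?_
    rw [hSTt.2 (y := ⟨x, hSTt.1 x.2⟩) rfl]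
    exact adjoint_isFormalAdjoint hTt _ y
  rw [← adjoint_domain_eq_bdryAnnihilator hT hTS hSTt,
    ← adjoint_domain_eq_bdryAnnihilator hTt hTtS (adjoint_le_adjoint hT hTS), SetLike.coe_set_eq]
  exact isClosed_iff_domain_eq_adjoint_adjoint_domain hS (hTt.mono hTtS.1)

theorem statement3_general [CompleteSpace E] [CompleteSpace F]
    {T : E →ₗ.[𝕜] F} {Tt : F →ₗ.[𝕜] E} (hT : Dense (T.domain : Set E))
    (hTt : Dense (Tt.domain : Set F)) (hadj : T.IsFormalAdjoint Tt)
    {V : Submodule 𝕜 E} (hTV : T.domain ≤ V) (hVW : V ≤ (Tt†).domain) :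
    IsClosed {p : E × F | p.1 ∈ V ∧ p ∈ (Tt†).graph} ↔
      (V : Set E) = bdryAnnihilator (Tt†) (T†) (bdryAnnihilator (T†) (Tt†) V) := by
  have hTle : T ≤ Tt† := hadj.symm.le_adjoint hTt
  have hdom : ((Tt†).domRestrict V).domain = V := inf_eq_left.2 hVW
  have hTS : T ≤ (Tt†).domRestrict V :=
    ⟨hTV.trans hdom.ge, fun x y hxy =>
      (hTle.2 (y := ⟨y, y.2.2⟩) hxy).trans (domRestrict_apply rfl).symm⟩
  have hiff := isClosed_iff_eq_bdryAnnihilator_bdryAnnihilator hT hTt hTS domRestrict_le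
  rwa [LinearPMap.IsClosed, coe_graph_domRestrict, hdom] at hiff

end BdryAnnihilator

section

variable {K : Type*} [NormedAddCommGroup K] [InnerProductSpace ℂ K]

theorem bdryPerp_eq_bdryAnnihilator {A B : K →ₗ.[ℂ] K} (hdom : A.domain = B.domain) (S : Set K) :
    bdryPerp A B S = bdryAnnihilator A B S := by
  refine Set.ext fun u => exists_congr fun hu => ?_
  constructor
  · exact fun h w hw => sub_eq_zero.1 (h ⟨w, hdom.ge w.2⟩ w rfl hw)
  · exact fun h v w hvw hv => by rw [hvw, h w (hvw ▸ hv), sub_self]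

theorem IsPreFriedrichsPair.dense_domain_right {T Tt : K →ₗ.[ℂ] K}
    (hF : IsPreFriedrichsPair T Tt) : Dense (Tt.domain : Set K) :=
  hF.dom_eq ▸ hF.dense'

end

namespace IsPreFriedrichsPair

variable {T Tt : H →ₗ.[ℂ] H}

theorem exists_isSelfAdjoint_eq_vadd_neg (hF : IsPreFriedrichsPair T Tt) :
    ∃ C : H →L[ℂ] H, IsSelfAdjoint C ∧ T = (C : H →ₗ[ℂ] H) +ᵥ -Tt := by
  obtain ⟨c, -, hc⟩ := hF.t2
  have hdom : (T + Tt).domain = T.domain := by rw [add_domain, ← hF.dom_eq, inf_idem]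
  obtain ⟨C, hC, hCadd⟩ :=
    exists_isSelfAdjoint_extension (hdom ▸ hF.dense') (isFormalAdjoint_add_self hF.t1) hc
  refine ⟨C, hC, dExt hF.dom_eq fun x y hxy => ?_⟩
  have hCy : C y = T x + Tt y := by
    rw [← hxy, hCadd ⟨x, x.2, hxy ▸ y.2⟩, LinearPMap.add_apply]
    exact congrArg (T x + Tt ·) (Subtype.ext hxy)
  rw [vadd_apply, LinearPMap.neg_apply, ContinuousLinearMap.coe_coe, hCy, add_neg_cancel_right]

theorem exists_isSelfAdjoint_adjoint_eq_vadd_neg (hF : IsPreFriedrichsPair T Tt) :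
    ∃ C : H →L[ℂ] H, IsSelfAdjoint C ∧ T† = (C : H →ₗ[ℂ] H) +ᵥ -Tt† := by
  obtain ⟨C, hC, rfl⟩ := hF.exists_isSelfAdjoint_eq_vadd_neg
  exact ⟨C, hC, by rw [adjoint_vadd_neg C hF.dense_domain_right, hC.adjoint_eq]⟩

theorem bdryPerp_bdryPerp_eq (hF : IsPreFriedrichsPair T Tt) (S : Set H) :
    bdryPerp (Tt†) (T†) (bdryPerp (Tt†) (T†) S) =
      bdryAnnihilator (Tt†) (T†) (bdryAnnihilator (T†) (Tt†) S) := by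
  obtain ⟨C, hC, hadj⟩ := hF.exists_isSelfAdjoint_adjoint_eq_vadd_neg
  have hdom : (Tt†).domain = (T†).domain := by rw [hadj, vadd_domain, neg_domain]
  rw [bdryPerp_eq_bdryAnnihilator hdom, bdryPerp_eq_bdryAnnihilator hdom, hadj,
    bdryAnnihilator_vadd_neg_comm hC]

end IsPreFriedrichsPair

/-- Under (T1)–(T2), a subspace `V` of the graph space `W` containing `W₀` is
closed in `W` (with respect to the graph norm, equivalently: the graph of `T₁|_V` is closed)
iff `V = V^{[⊥][⊥]}`. -/
theorem statement3 (T Tt : H →ₗ.[ℂ] H) (hF : IsPreFriedrichsPair T Tt)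
    (V : Submodule ℂ H) (hV₀ : T.closure.domain ≤ V) (hVW : V ≤ (Tt†).domain) :
    IsClosed {p : H × H | p.1 ∈ V ∧ p ∈ (Tt†).graph} ↔
      (V : Set H) = bdryPerp (Tt†) (T†) (bdryPerp (Tt†) (T†) (V : Set H)) := by
  rw [hF.bdryPerp_bdryPerp_eq]
  exact statement3_general hF.dense' hF.dense_domain_right hF.t1
    ((le_closure T).1.trans hV₀) hVW
end
end

section
/- Let (T₀, T̃₀) be a joint pair of closed abstract Friedrichs operators on a complex Hilbert space H. Then T₀ and T̃₀ are injective with closed ranges, and H admits the orthogonal decompositions H = ran T₀ ⊕ ker T̃₁ and H = ran T̃₀ ⊕ ker T₁. -/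
open LinearPMap
open scoped LinearPMap

noncomputable section

variable {H : Type*} [NormedAddCommGroup H] [InnerProductSpace ℂ H] [CompleteSpace H]

local notation "⟪" x ", " y "⟫" => @inner ℂ _ _ x y

/-- The kernel of a partially defined operator, as a submodule of the ambient space. -/
def pKer (f : H →ₗ.[ℂ] H) : Submodule ℂ H :=
  (LinearMap.ker f.toFun).map f.domain.subtype

/-!
Formal adjointness gives `Re ⟨(T + T̃)φ, φ⟩ = 2 Re ⟨Tφ, φ⟩`, so (T3) makes `T` coercive and, by
Cauchy–Schwarz, `μ₀‖φ‖ ≤ ‖Tφ‖`. Hence `T` is injective, and the second projection is bounded below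
on the graph of `T`; as the graph is complete, its image `ran T` is closed. The decomposition is
then the one along a closed subspace, since `ker T* = (ran T)ᗮ` for every densely defined `T`. The
hypotheses are symmetric in `T` and `T̃`.
-/

open scoped NNReal

section ClosedRange

variable {R E F : Type*} [CommRing R] [NormedAddCommGroup E] [NormedAddCommGroup F]
  [Module R E] [Module R F] {T : E →ₗ.[R] F} {K : ℝ≥0}

theorem antilipschitzWith_snd_graph (hT : AntilipschitzWith K T) :
    AntilipschitzWith (max K 1) (fun p : T.graph => (p : E × F).2) := by
  rintro ⟨p, hp⟩ ⟨q, hq⟩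
  obtain ⟨x, rfl⟩ := T.mem_graph_iff'.1 hp
  obtain ⟨y, rfl⟩ := T.mem_graph_iff'.1 hq
  rw [Subtype.edist_mk_mk, Prod.edist_eq, ENNReal.coe_max, ENNReal.coe_one]
  apply max_le
  · calc edist (x : E) y ≤ K * edist (T x) (T y) := hT x y
      _ ≤ max K 1 * edist (T x) (T y) := by gcongr; exact le_max_left _ _
  · exact le_mul_of_one_le_left' (le_max_right _ _)

theorem range_snd_graph (T : E →ₗ.[R] F) :
    Set.range (fun p : T.graph => (p : E × F).2) = Set.range T := by
  ext y
  simp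

theorem isClosed_range_of_antilipschitzWith [CompleteSpace E] [CompleteSpace F]
    (hclosed : T.IsClosed) (hT : AntilipschitzWith K T) : IsClosed (Set.range T) := by
  have : CompleteSpace T.graph := IsClosed.completeSpace_coe (hs := hclosed)
  rw [← range_snd_graph]
  exact (antilipschitzWith_snd_graph hT).isClosed_range
    (uniformContinuous_snd.comp uniformContinuous_subtype_val)

end ClosedRange

section Adjoint

variable {𝕜 E F : Type*} [RCLike 𝕜] [NormedAddCommGroup E] [InnerProductSpace 𝕜 E]
  [CompleteSpace E] [NormedAddCommGroup F] [InnerProductSpace 𝕜 F] {T : E →ₗ.[𝕜] F}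

theorem map_ker_adjoint_eq_orthogonal_range (hdense : Dense (T.domain : Set E)) :
    (LinearMap.ker T†.toFun).map T†.domain.subtype = (LinearMap.range T.toFun)ᗮ := by
  ext y
  rw [Submodule.mem_orthogonal']
  constructor
  · rintro ⟨z, hz : T† z = 0, rfl⟩ _ ⟨x, rfl⟩
    calc inner 𝕜 (z : F) (T x) = inner 𝕜 (T† z) (x : E) :=
          (adjoint_isFormalAdjoint hdense z x).symm
      _ = 0 := by rw [hz, inner_zero_left]
  · intro hy
    have zero_represents (x : T.domain) : inner 𝕜 (0 : E) (x : E) = inner 𝕜 y (T x) := by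
      rw [inner_zero_left]
      exact (hy _ ⟨x, rfl⟩).symm
    have hmem : y ∈ T†.domain := mem_adjoint_domain_of_exists y ⟨0, zero_represents⟩
    exact ⟨⟨y, hmem⟩, adjoint_apply_eq hdense ⟨y, hmem⟩ zero_represents, rfl⟩

theorem isCompl_range_map_ker_adjoint [CompleteSpace F] (hdense : Dense (T.domain : Set E))
    (hrange : IsClosed (Set.range T)) :
    IsCompl (LinearMap.range T.toFun) ((LinearMap.ker T†.toFun).map T†.domain.subtype) := by
  have : CompleteSpace (LinearMap.range T.toFun) := IsClosed.completeSpace_coe (hs := hrange)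
  rw [map_ker_adjoint_eq_orthogonal_range hdense]
  exact Submodule.isCompl_orthogonal _

end Adjoint

section Coercive

variable {𝕜 E : Type*} [RCLike 𝕜] [NormedAddCommGroup E] [InnerProductSpace 𝕜 E]
  {T S : E →ₗ.[𝕜] E} {μ : ℝ≥0}

theorem antilipschitzWith_of_le_re_inner (hμ : 0 < μ)
    (hT : ∀ x : T.domain, μ * ‖(x : E)‖ ^ 2 ≤ RCLike.re (inner 𝕜 (T x) (x : E))) :
    AntilipschitzWith μ⁻¹ T := by
  refine AddMonoidHomClass.antilipschitz_of_bound T.toFun fun x => ?_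
  rw [NNReal.coe_inv, le_inv_mul_iff₀ (NNReal.coe_pos.2 hμ)]
  change μ * ‖(x : E)‖ ≤ ‖T x‖
  rcases (norm_nonneg (x : E)).eq_or_lt with hx | hx
  · simp [← hx]
  · refine le_of_mul_le_mul_right ?_ hx
    calc μ * ‖(x : E)‖ * ‖(x : E)‖ = μ * ‖(x : E)‖ ^ 2 := by ring
      _ ≤ RCLike.re (inner 𝕜 (T x) (x : E)) := hT x
      _ ≤ ‖T x‖ * ‖(x : E)‖ := re_inner_le_norm _ _

theorem re_inner_add_apply_self_of_isFormalAdjoint (hTS : T.IsFormalAdjoint S)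
    (x : (T + S).domain) :
    RCLike.re (inner 𝕜 ((T + S) x) (x : E)) =
      2 * RCLike.re (inner 𝕜 (T ⟨x, x.2.1⟩) (x : E)) := by
  have hST : RCLike.re (inner 𝕜 (S ⟨x, x.2.2⟩) (x : E)) =
      RCLike.re (inner 𝕜 (T ⟨x, x.2.1⟩) (x : E)) := by
    rw [inner_re_symm]
    exact congrArg RCLike.re (hTS ⟨x, x.2.1⟩ ⟨x, x.2.2⟩).symm
  rw [LinearPMap.add_apply, inner_add_left, _root_.map_add, hST, two_mul]

theorem antilipschitzWith_of_isFormalAdjoint (hdom : T.domain ≤ S.domain)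
    (hTS : T.IsFormalAdjoint S) (hμ : 0 < μ)
    (hcoercive : ∀ x : (T + S).domain,
      2 * μ * ‖(x : E)‖ ^ 2 ≤ RCLike.re (inner 𝕜 ((T + S) x) (x : E))) :
    AntilipschitzWith μ⁻¹ T := by
  refine antilipschitzWith_of_le_re_inner hμ fun x => ?_
  have hx := hcoercive ⟨x, x.2, hdom x.2⟩
  rw [re_inner_add_apply_self_of_isFormalAdjoint hTS] at hx
  linarith

end Coercive

theorem statement8_general {𝕜 E : Type*} [RCLike 𝕜] [NormedAddCommGroup E]
    [InnerProductSpace 𝕜 E] [CompleteSpace E] {T S : E →ₗ.[𝕜] E} (hdom : T.domain = S.domain)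
    (hdense : Dense (T.domain : Set E)) (hTS : T.IsFormalAdjoint S) {μ : ℝ} (hμ : 0 < μ)
    (hcoercive : ∀ x : (T + S).domain,
      2 * μ * ‖(x : E)‖ ^ 2 ≤ RCLike.re (inner 𝕜 ((T + S) x) (x : E)))
    (hT : T.IsClosed) (hS : S.IsClosed) :
    Function.Injective T ∧ Function.Injective S ∧
    IsClosed (Set.range T) ∧ IsClosed (Set.range S) ∧
    ((LinearMap.ker T†.toFun).map T†.domain.subtype = (LinearMap.range T.toFun)ᗮ ∧
      IsCompl (LinearMap.range T.toFun) ((LinearMap.ker T†.toFun).map T†.domain.subtype)) ∧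
    ((LinearMap.ker S†.toFun).map S†.domain.subtype = (LinearMap.range S.toFun)ᗮ ∧
      IsCompl (LinearMap.range S.toFun) ((LinearMap.ker S†.toFun).map S†.domain.subtype)) := by
  lift μ to ℝ≥0 using hμ.le
  rw [NNReal.coe_pos] at hμ
  have hdenseS : Dense (S.domain : Set E) := hdom ▸ hdense
  have hTanti : AntilipschitzWith μ⁻¹ T :=
    antilipschitzWith_of_isFormalAdjoint hdom.le hTS hμ hcoercive
  have hSanti : AntilipschitzWith μ⁻¹ S :=
    antilipschitzWith_of_isFormalAdjoint hdom.ge hTS.symm hμ (add_comm T S ▸ hcoercive)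
  have hTrange := isClosed_range_of_antilipschitzWith hT hTanti
  have hSrange := isClosed_range_of_antilipschitzWith hS hSanti
  exact ⟨hTanti.injective, hSanti.injective, hTrange, hSrange,
    ⟨map_ker_adjoint_eq_orthogonal_range hdense, isCompl_range_map_ker_adjoint hdense hTrange⟩,
    ⟨map_ker_adjoint_eq_orthogonal_range hdenseS, isCompl_range_map_ker_adjoint hdenseS hSrange⟩⟩

/-- For a joint pair `(T₀, T̃₀)` of closed abstract Friedrichs operators:
`T₀` and `T̃₀` are injective with closed ranges, and `H` admits the orthogonal decompositions
`H = ran T₀ ⊕ ker T̃₁` and `H = ran T̃₀ ⊕ ker T₁` (with `T₁ := T̃₀*`, `T̃₁ := T₀*`). -/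
theorem statement8 (T Tt : H →ₗ.[ℂ] H) (hF : IsFriedrichsPair T Tt)
    (hT : T.IsClosed) (hTt : Tt.IsClosed) :
    Function.Injective (fun x : T.domain => T x) ∧
    Function.Injective (fun x : Tt.domain => Tt x) ∧
    IsClosed (Set.range (fun x : T.domain => T x)) ∧
    IsClosed (Set.range (fun x : Tt.domain => Tt x)) ∧
    (pKer (T†) = (LinearMap.range T.toFun)ᗮ ∧
      IsCompl (LinearMap.range T.toFun) (pKer (T†))) ∧
    (pKer (Tt†) = (LinearMap.range Tt.toFun)ᗮ ∧
      IsCompl (LinearMap.range Tt.toFun) (pKer (Tt†))) := by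
  obtain ⟨μ₀, hμ₀, hcoercive⟩ := hF.t3
  exact statement8_general hF.dom_eq hF.dense' hF.t1 hμ₀ hcoercive hT hTt
end
end

section
/- Let (T₀, T̃₀) be a joint pair of closed abstract Friedrichs operators on a complex Hilbert space H, with minimal domain W₀ and graph space W. Then the sum W₀ + ker T₁ + ker T̃₁ is direct and it is a closed subspace of W with respect to the graph norm. In particular, W₀ ∔ ker T₁ and W₀ ∔ ker T̃₁ are both closed in W. -/
open LinearPMap
open scoped LinearPMap

noncomputable section

variable {H : Type*} [NormedAddCommGroup H] [InnerProductSpace ℂ H] [CompleteSpace H]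

local notation "⟪" x ", " y "⟫" => @inner ℂ _ _ x y

/-!
Let `S` be the bounded extension of `T + T̃`; it is symmetric and `⟨S x, x⟩ ≥ 2 μ₀ ‖x‖²`. On the
graph space `T₁ + T̃₁ = S`, so inside the graph of `T₁` the three summands become the closed
subspaces formed by the pairs `(u, T u)` with `u ∈ W₀`, `(a, 0)` with `a ∈ ker T₁`, and `(b, S b)`
with `b ∈ ker T̃₁`. For a sum `(x, w)` of three such pairs, `w = T u + S b` with `T u ⟂ b`, and
`S x - w = T̃ u + S a` with `T̃ u ⟂ a`. Pairing with `b` and `a` and using coercivity yields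
`2 μ₀ ‖b‖ ≤ ‖w‖` and `2 μ₀ ‖a‖ ≤ ‖S x - w‖`: the summands depend boundedly on the sum, which gives
both directness and closedness.
-/

section PositiveAngle

variable {𝕜 E : Type*} [NormedField 𝕜] [NormedAddCommGroup E] [NormedSpace 𝕜 E]

/-- The subspaces `N` and `M` form a positive angle: the component in `M` of a sum `n + m` is
controlled by the norm of the sum. For closed subspaces of a Banach space this makes `N + M` a
topological direct sum. -/
def HasPositiveAngle (N M : Submodule 𝕜 E) : Prop :=
  ∃ K : ℝ, ∀ n ∈ N, ∀ m ∈ M, ‖m‖ ≤ K * ‖n + m‖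

namespace HasPositiveAngle

variable {N N' M : Submodule 𝕜 E}

theorem mono_left (h : HasPositiveAngle N' M) (hN : N ≤ N') : HasPositiveAngle N M :=
  let ⟨K, hK⟩ := h
  ⟨K, fun n hn ↦ hK n (hN hn)⟩

theorem disjoint (h : HasPositiveAngle N M) : Disjoint N M := by
  obtain ⟨K, hK⟩ := h
  refine Submodule.disjoint_def.2 fun x hN hM ↦ norm_le_zero_iff.1 ?_
  simpa using hK (-x) (N.neg_mem hN) x hM

theorem isClosed_sup [CompleteSpace E] (h : HasPositiveAngle N M) (hN : IsClosed (N : Set E))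
    (hM : IsClosed (M : Set E)) : IsClosed ((N ⊔ M : Submodule 𝕜 E) : Set E) := by
  obtain ⟨K, hK⟩ := h
  have := hN.completeSpace_coe
  have := hM.completeSpace_coe
  let addMap : N × M →L[𝕜] E := N.subtypeL.coprod M.subtypeL
  have norm_le (p : N × M) : ‖p‖ ≤ ↑(1 + K.toNNReal) * ‖addMap p‖ := by
    obtain ⟨n, m⟩ := p
    have hm : ‖(m : E)‖ ≤ K.toNNReal * ‖(n + m : E)‖ :=
      (hK n n.2 m m.2).trans (by gcongr; exact K.le_coe_toNNReal)
    have hn : ‖(n : E)‖ ≤ ‖(n + m : E)‖ + ‖(m : E)‖ := by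
      simpa using norm_sub_le (n + m : E) m
    change max ‖(n : E)‖ ‖(m : E)‖ ≤ ↑(1 + K.toNNReal) * ‖(n + m : E)‖
    push_cast
    exact max_le (by linarith) (by linarith [norm_nonneg (n + m : E)])
  have range_addMap : Set.range addMap = (N ⊔ M : Submodule 𝕜 E) := by
    ext x
    simp [addMap, Submodule.mem_sup]
  rw [← range_addMap]
  exact (addMap.antilipschitz_of_bound norm_le).isClosed_range addMap.uniformContinuous

end HasPositiveAngle

end PositiveAngle

section Graph

variable {R E F : Type*} [Ring R] [AddCommGroup E] [Module R E] [AddCommGroup F] [Module R F]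

theorem mem_graph_toPMap_iff {f : E →ₗ[R] F} {B : Submodule R E} {p : E × F} :
    p ∈ (f.toPMap B).graph ↔ p.1 ∈ B ∧ f p.1 = p.2 := by
  rw [LinearPMap.mem_graph_iff]
  exact ⟨fun ⟨y, hy, hf⟩ ↦ hy ▸ ⟨y.2, hf⟩, fun ⟨hp, hf⟩ ↦ ⟨⟨p.1, hp⟩, rfl, hf⟩⟩

variable {N M : Submodule R (E × F)} {f : E →ₗ.[R] F}

theorem mem_iff_fst_mem_map_of_le_graph (hN : N ≤ f.graph) {p : E × F} :
    p ∈ N ↔ p.1 ∈ N.map (LinearMap.fst R E F) ∧ p ∈ f.graph := by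
  refine ⟨fun hp ↦ ⟨⟨p, hp, rfl⟩, hN hp⟩, ?_⟩
  rintro ⟨⟨q, hq, hqp⟩, hp⟩
  have hqp' : q = p := Prod.ext hqp (f.mem_graph_snd_inj' (hN hq) hp hqp)
  exact hqp' ▸ hq

theorem disjoint_map_fst_of_le_graph (hN : N ≤ f.graph) (hM : M ≤ f.graph) (h : Disjoint N M) :
    Disjoint (N.map (LinearMap.fst R E F)) (M.map (LinearMap.fst R E F)) := by
  rw [Submodule.disjoint_def]
  rintro _ ⟨p, hpN, rfl⟩ hpM
  have hp : p ∈ M := (mem_iff_fst_mem_map_of_le_graph hM).2 ⟨hpM, hN hpN⟩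
  rw [Submodule.disjoint_def.1 h p hpN hp, _root_.map_zero]

theorem isClosed_fst_mem_map_and_mem_graph [TopologicalSpace E] [TopologicalSpace F]
    (hN : N ≤ f.graph) (hNc : IsClosed (N : Set (E × F))) :
    IsClosed {p : E × F | p.1 ∈ N.map (LinearMap.fst R E F) ∧ p ∈ f.graph} := by
  convert hNc using 1
  exact Set.ext fun _ ↦ (mem_iff_fst_mem_map_of_le_graph hN).symm

end Graph

theorem isClosed_toPMap {R E F : Type*} [CommRing R] [AddCommGroup E] [Module R E]
    [TopologicalSpace E] [AddCommGroup F] [Module R F] [TopologicalSpace F] [T2Space F]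
    (f : E →L[R] F) {B : Submodule R E} (hB : IsClosed (B : Set E)) :
    ((f : E →ₗ[R] F).toPMap B).IsClosed := by
  have graph_eq : (((f : E →ₗ[R] F).toPMap B).graph : Set (E × F)) =
      {p | p.1 ∈ B} ∩ {p | f p.1 = p.2} := Set.ext fun _ ↦ mem_graph_toPMap_iff
  rw [LinearPMap.IsClosed, graph_eq]
  exact (hB.preimage continuous_fst).inter (isClosed_eq (by fun_prop) continuous_snd)

section Coercive

variable {𝕜 E F : Type*} [RCLike 𝕜] [NormedAddCommGroup E] [InnerProductSpace 𝕜 E]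
  [NormedAddCommGroup F] [NormedSpace 𝕜 F]

theorem mul_norm_le_norm_add_of_inner_eq_zero {c : ℝ} {x s t : E}
    (hs : c * ‖x‖ ^ 2 ≤ RCLike.re (inner 𝕜 s x)) (ht : inner 𝕜 t x = 0) :
    c * ‖x‖ ≤ ‖t + s‖ := by
  rcases eq_or_ne x 0 with rfl | hx
  · simp
  refine le_of_mul_le_mul_right ?_ (norm_pos_iff.2 hx)
  calc c * ‖x‖ * ‖x‖ = c * ‖x‖ ^ 2 := by ring
    _ ≤ RCLike.re (inner 𝕜 (t + s) x) := by rwa [inner_add_left, ht, zero_add]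
    _ ≤ ‖t + s‖ * ‖x‖ := (RCLike.re_le_norm _).trans (norm_inner_le_norm _ _)

theorem hasPositiveAngle_graph_toPMap {N : Submodule 𝕜 (E × F)} {B : Submodule 𝕜 E}
    (f : E →L[𝕜] F) (L : E × F →L[𝕜] E) {c : ℝ} (hc : 0 < c)
    (hcoercive : ∀ b ∈ B, c * ‖b‖ ^ 2 ≤ RCLike.re (inner 𝕜 (L (b, f b)) b))
    (horth : ∀ n ∈ N, ∀ b ∈ B, inner 𝕜 (L n) b = 0) :
    HasPositiveAngle N ((f : E →ₗ[𝕜] F).toPMap B).graph := by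
  let ι : E →L[𝕜] E × F := (ContinuousLinearMap.id 𝕜 E).prod f
  refine ⟨‖ι‖ * (‖L‖ / c), fun n hn m hm ↦ ?_⟩
  obtain ⟨hb, hf⟩ := mem_graph_toPMap_iff.1 hm
  have hm_eq : m = ι m.1 := Prod.ext rfl hf.symm
  have mul_norm_fst_le : c * ‖m.1‖ ≤ ‖L‖ * ‖n + m‖ :=
    calc c * ‖m.1‖ ≤ ‖L n + L (ι m.1)‖ :=
          mul_norm_le_norm_add_of_inner_eq_zero (hcoercive _ hb) (horth n hn _ hb)
      _ = ‖L (n + m)‖ := by rw [← hm_eq, _root_.map_add]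
      _ ≤ ‖L‖ * ‖n + m‖ := L.le_opNorm _
  calc ‖m‖ = ‖ι m.1‖ := congrArg norm hm_eq
    _ ≤ ‖ι‖ * ‖m.1‖ := ι.le_opNorm _
    _ ≤ ‖ι‖ * (‖L‖ / c * ‖n + m‖) := by
        gcongr
        rwa [div_mul_eq_mul_div, le_div_iff₀' hc]
    _ = ‖ι‖ * (‖L‖ / c) * ‖n + m‖ := (mul_assoc _ _ _).symm

end Coercive

section Adjoint

variable {𝕜 E F : Type*} [RCLike 𝕜] [NormedAddCommGroup E] [InnerProductSpace 𝕜 E]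
  [CompleteSpace E] [NormedAddCommGroup F] [InnerProductSpace 𝕜 F] {T : E →ₗ.[𝕜] F}

theorem mem_graph_adjoint_iff (hT : Dense (T.domain : Set E)) {x : F} {w : E} :
    (x, w) ∈ T†.graph ↔ ∀ φ : T.domain, inner 𝕜 w φ = inner 𝕜 x (T φ) := by
  refine ⟨fun h φ ↦ ?_, fun h ↦ ?_⟩
  · obtain ⟨y, rfl, rfl⟩ := (LinearPMap.mem_graph_iff _).1 h
    exact LinearPMap.adjoint_isFormalAdjoint hT y φ
  · have hx : x ∈ T†.domain := LinearPMap.mem_adjoint_domain_of_exists x ⟨w, h⟩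
    exact (LinearPMap.mem_graph_iff _).2 ⟨⟨x, hx⟩, rfl, LinearPMap.adjoint_apply_eq hT ⟨x, hx⟩ h⟩

end Adjoint

section Kernel

variable {E : Type*} [NormedAddCommGroup E] [InnerProductSpace ℂ E] {T : E →ₗ.[ℂ] E}

theorem mem_pKer_iff {x : E} : x ∈ pKer T ↔ (x, (0 : E)) ∈ T.graph := by
  simp only [pKer, Submodule.mem_map, LinearMap.mem_ker, LinearPMap.mem_graph_iff]
  exact exists_congr fun _ ↦ and_comm

theorem isClosed_pKer (hT : T.IsClosed) : IsClosed (pKer T : Set E) := by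
  have pKer_eq : (pKer T : Set E) = (fun x ↦ (x, (0 : E))) ⁻¹' T.graph :=
    Set.ext fun _ ↦ mem_pKer_iff
  rw [pKer_eq]
  exact hT.preimage (by fun_prop)

theorem graph_zero_toPMap_pKer_le : ((0 : E →ₗ[ℂ] E).toPMap (pKer T)).graph ≤ T.graph := by
  rintro ⟨x, w⟩ hxw
  obtain ⟨hx, hw : 0 = w⟩ := mem_graph_toPMap_iff.1 hxw
  subst hw
  exact mem_pKer_iff.1 hx

theorem inner_apply_eq_zero_of_mem_pKer_adjoint [CompleteSpace E]
    (hT : Dense (T.domain : Set E)) {x : E} (hx : x ∈ pKer (T†)) (φ : T.domain) : ⟪T φ, x⟫ = 0 := by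
  rw [inner_eq_zero_symm, ← (mem_graph_adjoint_iff hT).1 (mem_pKer_iff.1 hx), inner_zero_left]

end Kernel

namespace IsPreFriedrichsPair

variable {E : Type*} [NormedAddCommGroup E] [InnerProductSpace ℂ E] {T Tt : E →ₗ.[ℂ] E}

theorem dense_domain_right_s11 (h : IsPreFriedrichsPair T Tt) : Dense (Tt.domain : Set E) :=
  h.dom_eq ▸ h.dense'

theorem denseRange_subtype_domain_add (h : IsPreFriedrichsPair T Tt) :
    DenseRange (T + Tt).domain.subtype :=
  h.dense'.mono fun x hx ↦ ⟨⟨x, hx, h.dom_eq ▸ hx⟩, rfl⟩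

end IsPreFriedrichsPair

section Friedrichs

/-- The bounded operator on `H` extending `T + T̃` from the common dense domain of a pair satisfying
(T1)–(T2). For a pair whose sum is not bounded or not densely defined it is a junk value. -/
def boundedSum (T Tt : H →ₗ.[ℂ] H) : H →L[ℂ] H :=
  (T + Tt).toFun.extendOfNorm (T + Tt).domain.subtype

variable {T Tt : H →ₗ.[ℂ] H}

namespace IsPreFriedrichsPair

theorem boundedSum_coe (h : IsPreFriedrichsPair T Tt) (φ : (T + Tt).domain) :
    boundedSum T Tt φ = (T + Tt) φ :=
  let ⟨c, _, hc⟩ := h.t2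
  LinearMap.extendOfNorm_eq h.denseRange_subtype_domain_add ⟨c, hc⟩ φ

theorem boundedSum_apply (h : IsPreFriedrichsPair T Tt) {x : H} (hx : x ∈ T.domain)
    (hx' : x ∈ Tt.domain) : boundedSum T Tt x = T ⟨x, hx⟩ + Tt ⟨x, hx'⟩ :=
  h.boundedSum_coe ⟨x, hx, hx'⟩

theorem isSymmetric_boundedSum (h : IsPreFriedrichsPair T Tt) :
    (boundedSum T Tt : H →ₗ[ℂ] H).IsSymmetric := by
  have h1 : T.IsFormalAdjoint Tt := h.t1
  intro x y
  refine h.denseRange_subtype_domain_add.induction_on₂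
    (p := fun x y ↦ ⟪boundedSum T Tt x, y⟫ = ⟪x, boundedSum T Tt y⟫)
    (isClosed_eq (by fun_prop) (by fun_prop)) ?_ x y
  rintro ⟨a, ha, ha'⟩ ⟨b, hb, hb'⟩
  simp only [Submodule.subtype_apply]
  rw [h.boundedSum_apply ha ha', h.boundedSum_apply hb hb', inner_add_left, inner_add_right,
    h1 ⟨a, ha⟩ ⟨b, hb'⟩, h1.symm ⟨a, ha'⟩ ⟨b, hb⟩, add_comm]

theorem graph_le_graph_adjoint (h : IsPreFriedrichsPair T Tt) : T.graph ≤ Tt†.graph :=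
  LinearPMap.le_graph_of_le <| LinearPMap.IsFormalAdjoint.le_adjoint h.dense_domain_right_s11 <|
    LinearPMap.IsFormalAdjoint.symm h.t1

theorem boundedSum_sub_mem_graph_adjoint (h : IsPreFriedrichsPair T Tt) {x w : H}
    (hx : (x, w) ∈ T†.graph) : (x, boundedSum T Tt x - w) ∈ Tt†.graph := by
  rw [mem_graph_adjoint_iff h.dense_domain_right_s11]
  rintro ⟨φ, hφ'⟩
  have hφ : φ ∈ T.domain := h.dom_eq ▸ hφ'
  have inner_w : ⟪w, φ⟫ = ⟪x, T ⟨φ, hφ⟩⟫ := (mem_graph_adjoint_iff h.dense').1 hx ⟨φ, hφ⟩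
  calc ⟪boundedSum T Tt x - w, φ⟫
      = ⟪x, boundedSum T Tt φ⟫ - ⟪w, φ⟫ := by
        rw [inner_sub_left]
        exact congrArg (· - ⟪w, φ⟫) (h.isSymmetric_boundedSum x φ)
    _ = ⟪x, Tt ⟨φ, hφ'⟩⟫ := by
        rw [h.boundedSum_apply hφ hφ', inner_add_right, inner_w, add_sub_cancel_left]

theorem graph_boundedSum_toPMap_pKer_le (h : IsPreFriedrichsPair T Tt) :
    ((boundedSum T Tt : H →ₗ[ℂ] H).toPMap (pKer (T†))).graph ≤ Tt†.graph := by
  rintro ⟨x, w⟩ hxw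
  obtain ⟨hx, hw : boundedSum T Tt x = w⟩ := mem_graph_toPMap_iff.1 hxw
  subst hw
  simpa using h.boundedSum_sub_mem_graph_adjoint (mem_pKer_iff.1 hx)

end IsPreFriedrichsPair

namespace IsFriedrichsPair

theorem exists_boundedSum_coercive (h : IsFriedrichsPair T Tt) :
    ∃ c : ℝ, 0 < c ∧ ∀ x, c * ‖x‖ ^ 2 ≤ RCLike.re ⟪boundedSum T Tt x, x⟫ := by
  obtain ⟨μ, hμ, h3⟩ := h.t3
  refine ⟨2 * μ, by positivity, fun x ↦ ?_⟩
  refine h.denseRange_subtype_domain_add.induction_on x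
    (isClosed_le (by fun_prop) (RCLike.continuous_re.comp (by fun_prop))) fun φ ↦ ?_
  rw [Submodule.subtype_apply, h.boundedSum_coe]
  exact h3 φ

theorem hasPositiveAngle_pKer_adjoint_right (h : IsFriedrichsPair T Tt) :
    HasPositiveAngle T.graph ((0 : H →ₗ[ℂ] H).toPMap (pKer (Tt†))).graph := by
  obtain ⟨c, hc, hS⟩ := h.exists_boundedSum_coercive
  refine hasPositiveAngle_graph_toPMap 0
    ((boundedSum T Tt).comp (ContinuousLinearMap.fst ℂ H H) - ContinuousLinearMap.snd ℂ H H) hc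
    (fun a _ ↦ by simpa using hS a) ?_
  rintro ⟨_, _⟩ hp a ha
  obtain ⟨⟨u, hu⟩, rfl, rfl⟩ := (LinearPMap.mem_graph_iff _).1 hp
  have hu' : u ∈ Tt.domain := h.dom_eq ▸ hu
  have sum_sub : boundedSum T Tt u - T ⟨u, hu⟩ = Tt ⟨u, hu'⟩ := by
    rw [h.boundedSum_apply hu hu', add_sub_cancel_left]
  simpa [sum_sub] using inner_apply_eq_zero_of_mem_pKer_adjoint h.dense_domain_right_s11 ha ⟨u, hu'⟩

theorem hasPositiveAngle_pKer_adjoint_left (h : IsFriedrichsPair T Tt) :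
    HasPositiveAngle (T.graph ⊔ ((0 : H →ₗ[ℂ] H).toPMap (pKer (Tt†))).graph)
      ((boundedSum T Tt : H →ₗ[ℂ] H).toPMap (pKer (T†))).graph := by
  obtain ⟨c, hc, hS⟩ := h.exists_boundedSum_coercive
  refine hasPositiveAngle_graph_toPMap _ (ContinuousLinearMap.snd ℂ H H) hc (fun b _ ↦ hS b) ?_
  intro n hn b hb
  obtain ⟨p, hp, q, hq, rfl⟩ := Submodule.mem_sup.1 hn
  obtain ⟨u, -, hTu⟩ := (LinearPMap.mem_graph_iff _).1 hp
  have hq2 : q.2 = 0 := (mem_graph_toPMap_iff.1 hq).2.symm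
  simpa [hq2, ← hTu] using inner_apply_eq_zero_of_mem_pKer_adjoint h.dense' hb u

theorem disjoint_domain_pKer_adjoint_right (h : IsFriedrichsPair T Tt) :
    Disjoint T.domain (pKer (Tt†)) := by
  simpa only [LinearPMap.graph_map_fst_eq_domain, LinearMap.toPMap_domain] using
    disjoint_map_fst_of_le_graph h.graph_le_graph_adjoint graph_zero_toPMap_pKer_le
      h.hasPositiveAngle_pKer_adjoint_right.disjoint

theorem disjoint_domain_sup_pKer_adjoint_left (h : IsFriedrichsPair T Tt) :
    Disjoint (T.domain ⊔ pKer (Tt†)) (pKer (T†)) := by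
  simpa only [Submodule.map_sup, LinearPMap.graph_map_fst_eq_domain, LinearMap.toPMap_domain] using
    disjoint_map_fst_of_le_graph (sup_le h.graph_le_graph_adjoint graph_zero_toPMap_pKer_le)
      h.graph_boundedSum_toPMap_pKer_le h.hasPositiveAngle_pKer_adjoint_left.disjoint

theorem eq_zero_of_add_add_eq_zero (h : IsFriedrichsPair T Tt) {u a b : H} (hu : u ∈ T.domain)
    (ha : a ∈ pKer (Tt†)) (hb : b ∈ pKer (T†)) (hsum : u + a + b = 0) :
    u = 0 ∧ a = 0 ∧ b = 0 := by
  obtain ⟨hua, hb0⟩ := Submodule.disjoint_iff_add_eq_zero.1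
    h.disjoint_domain_sup_pKer_adjoint_left (Submodule.add_mem_sup hu ha) hb hsum
  obtain ⟨hu0, ha0⟩ := Submodule.disjoint_iff_add_eq_zero.1
    h.disjoint_domain_pKer_adjoint_right hu ha hua
  exact ⟨hu0, ha0, hb0⟩

end IsFriedrichsPair

end Friedrichs

/-- For a joint pair `(T₀, T̃₀)` of closed abstract Friedrichs operators, the
sum `W₀ + ker T₁ + ker T̃₁` is direct and closed in the graph space `W` with respect to the
graph norm (equivalently, the graph of the restriction of `T₁` to it is closed); in particular
`W₀ ∔ ker T₁` and `W₀ ∔ ker T̃₁` are closed in `W`. -/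
theorem statement11 (T Tt : H →ₗ.[ℂ] H) (hF : IsFriedrichsPair T Tt)
    (hT : T.IsClosed) (hTt : Tt.IsClosed) :
    (∀ u₀ ∈ T.domain, ∀ ν ∈ pKer (Tt†), ∀ ν' ∈ pKer (T†),
      u₀ + ν + ν' = 0 → u₀ = 0 ∧ ν = 0 ∧ ν' = 0) ∧
    IsClosed {p : H × H | p.1 ∈ (T.domain ⊔ pKer (Tt†) ⊔ pKer (T†) : Submodule ℂ H) ∧
      p ∈ (Tt†).graph} ∧
    IsClosed {p : H × H | p.1 ∈ (T.domain ⊔ pKer (Tt†) : Submodule ℂ H) ∧ p ∈ (Tt†).graph} ∧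
    IsClosed {p : H × H | p.1 ∈ (T.domain ⊔ pKer (T†) : Submodule ℂ H) ∧ p ∈ (Tt†).graph} := by
  have hA := isClosed_toPMap (0 : H →L[ℂ] H)
    (isClosed_pKer (LinearPMap.adjoint_isClosed hF.dense_domain_right_s11))
  have hB := isClosed_toPMap (boundedSum T Tt)
    (isClosed_pKer (LinearPMap.adjoint_isClosed hF.dense'))
  have angleA := hF.hasPositiveAngle_pKer_adjoint_right
  have angleB := hF.hasPositiveAngle_pKer_adjoint_left
  have leT := hF.graph_le_graph_adjoint
  have leA := graph_zero_toPMap_pKer_le (T := Tt†)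
  have leB := hF.graph_boundedSum_toPMap_pKer_le
  have closedTA := angleA.isClosed_sup hT hA
  have closedTB := (angleB.mono_left le_sup_left).isClosed_sup hT hB
  have closedTAB := angleB.isClosed_sup closedTA hB
  refine ⟨fun _ hu₀ _ hν _ hν' ↦ hF.eq_zero_of_add_add_eq_zero hu₀ hν hν', ?_, ?_, ?_⟩
  · simpa only [Submodule.map_sup, LinearPMap.graph_map_fst_eq_domain, LinearMap.toPMap_domain]
      using isClosed_fst_mem_map_and_mem_graph (sup_le (sup_le leT leA) leB) closedTAB
  · simpa only [Submodule.map_sup, LinearPMap.graph_map_fst_eq_domain, LinearMap.toPMap_domain]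
      using isClosed_fst_mem_map_and_mem_graph (sup_le leT leA) closedTA
  · simpa only [Submodule.map_sup, LinearPMap.graph_map_fst_eq_domain, LinearMap.toPMap_domain]
      using isClosed_fst_mem_map_and_mem_graph (sup_le leT leB) closedTB
end
end
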